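/- In the setting of Proposition 3.3 — G ∈ ℝ^{pd×pd} symmetric with Λ_min(G) ≥ 2πm_ξ > 0, β = G^{−1}g, Ĝ symmetric positive semi-definite and ĝ with |Ĝ−G|_∞ ≤ δ and |ĝ−g|_∞ ≤ δ, s_in δ ≤ πm_ξ/16, λ ≥ 4(‖β‖_1+1)δ, and β̂ a global minimizer of tr(M^⊤ĜM − 2M^⊤ĝ) + λ|M|_1 — suppose additionally that min{|β_{ij}| : β_{ij} ≠ 0} > 2𝔱 where 𝔱 := min(4‖G^{−1}‖_1 λ, 6√(s_in) λ/(πm_ξ)). Then the thresholded estimator β̂(𝔱), defined entrywise by β̂(𝔱)_{ij} := β̂_{ij}·1{|β̂_{ij}| > 𝔱}, satisfies sign(β̂(𝔱)_{ij}) = sign(β_{ij}) for all i, j; in particular the support of β̂(𝔱) equals the support of β. -/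

import Mathlib

open Matrix
open scoped Classical

/-- Maximum absolute column-sum norm `‖M‖₁ = max_j ∑_i |M i j|`. -/
noncomputable def colOneNorm {a b : ℕ} (M : Matrix (Fin a) (Fin b) ℝ) : ℝ :=
  ⨆ j : Fin b, ∑ i, |M i j|

/-- Maximum number of nonzero entries in a column, `s_in = max_j |{i : β i j ≠ 0}|`. -/
noncomputable def maxColSupport {a b : ℕ} (β : Matrix (Fin a) (Fin b) ℝ) : ℕ :=
  Finset.univ.sup fun j : Fin b => (Finset.univ.filter fun i : Fin a => β i j ≠ 0).card

/-- Entrywise hard-thresholding of a matrix at level `t`. -/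
noncomputable def hardThreshold {a b : ℕ} (M : Matrix (Fin a) (Fin b) ℝ) (t : ℝ) :
    Matrix (Fin a) (Fin b) ℝ :=
  Matrix.of fun i j => if t < |M i j| then M i j else 0

/-!
The criterion splits over the columns, so each column `x` of the estimator minimises
`x ↦ xᵀ A x - 2 xᵀ g + λ ‖x‖₁`, a Lasso problem. Half the gradient of its quadratic part at the true
column `b`, namely `A b - g`, is a noise term of size at most `λ / 4`. Two bounds for the error
`h = x - b` follow.

* Stationarity gives `|A x - g|_∞ ≤ λ / 2`; together with `‖x‖₁ ≤ 3 ‖b‖₁` and the entrywise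
  closeness of `A` to `G` this bounds `|G h|_∞`, and inverting `G` bounds `|h|_∞`.
* Comparing the objective at `x` and `b` puts `h` in the cone `‖h‖₁ ≤ 4 ‖h_S‖₁`, where `S` is the
  support of `b`. On this cone `A` inherits half of the eigenvalue lower bound of `G`, which bounds
  `‖h‖₂`.

Every entry is therefore estimated up to the smaller of the two radii, and an entry that vanishes
or exceeds twice the threshold keeps its sign.
-/

theorem two_mul_abs_le_of_forall_quadratic_nonneg {a r l : ℝ}
    (h : ∀ e : ℝ, 0 ≤ a * e ^ 2 + 2 * (e * r) + l * |e|) : 2 * |r| ≤ l := by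
  have hpos : ∀ t : ℝ, 0 < t → 2 * |r| - l ≤ a * t := by
    intro t ht
    refine le_of_mul_le_mul_right ?_ ht
    rcases abs_cases r with ⟨hr, -⟩ | ⟨hr, -⟩
    · have := h (-t)
      rw [abs_neg, abs_of_pos ht] at this
      rw [hr]
      linarith
    · have := h t
      rw [abs_of_pos ht] at this
      rw [hr]
      linarith
  have hlim : Filter.Tendsto (fun t => a * t) (nhdsWithin 0 (Set.Ioi 0)) (nhds 0) :=
    tendsto_nhdsWithin_of_tendsto_nhds <| by
      simpa only [mul_zero] using (continuous_const_mul a).tendsto 0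
  exact sub_nonpos.mp <| ge_of_tendsto hlim <| eventually_nhdsWithin_of_forall hpos

section LinearAlgebra

variable {ι : Type*} [Fintype ι] {A G : Matrix ι ι ℝ}

theorem mul_dotProduct_self_le_of_le_eigenvalues [DecidableEq ι] (hG : G.IsHermitian) {c : ℝ}
    (hc : ∀ i, c ≤ hG.eigenvalues i) (x : ι → ℝ) : c * (x ⬝ᵥ x) ≤ x ⬝ᵥ G *ᵥ x := by
  have hGc : (G - algebraMap ℝ (Matrix ι ι ℝ) c).PosSemidef := by
    open scoped MatrixOrder in
    refine Matrix.le_iff.mp <| algebraMap_le_of_le_spectrum (fun r hr => ?_) hG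
    rw [hG.spectrum_real_eq_range_eigenvalues] at hr
    obtain ⟨i, rfl⟩ := hr
    exact hc i
  have hx := hGc.dotProduct_mulVec_nonneg x
  simp only [star_trivial, Algebra.algebraMap_eq_smul_one, sub_mulVec, smul_mulVec, one_mulVec,
    dotProduct_sub, dotProduct_smul, smul_eq_mul] at hx
  linarith

theorem abs_dotProduct_le {c : ℝ} {y : ι → ℝ} (hy : ∀ i, |y i| ≤ c) (x : ι → ℝ) :
    |x ⬝ᵥ y| ≤ c * ∑ i, |x i| :=
  calc |x ⬝ᵥ y| ≤ ∑ i, |x i * y i| := Finset.abs_sum_le_sum_abs _ _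
    _ ≤ ∑ i, c * |x i| := Finset.sum_le_sum fun i _ => by
      rw [abs_mul, mul_comm]
      gcongr
      exact hy i
    _ = c * ∑ i, |x i| := (Finset.mul_sum ..).symm

theorem abs_mulVec_le {κ : Type*} {D : Matrix κ ι ℝ} {c : ℝ} (hD : ∀ i j, |D i j| ≤ c)
    (x : ι → ℝ) (i : κ) : |(D *ᵥ x) i| ≤ c * ∑ j, |x j| := by
  rw [mulVec, dotProduct_comm]
  exact abs_dotProduct_le (hD i) x

theorem abs_mulVec_sub_sub_mulVec_sub_le {κ : Type*} {A G : Matrix κ ι ℝ} {g g' : κ → ℝ} {δ : ℝ}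
    (hAG : ∀ i j, |A i j - G i j| ≤ δ) (hg : ∀ i, |g' i - g i| ≤ δ) (x : ι → ℝ) (i : κ) :
    |(A *ᵥ x - g') i - (G *ᵥ x - g) i| ≤ δ * (∑ j, |x j| + 1) :=
  calc |(A *ᵥ x - g') i - (G *ᵥ x - g) i| = |((A - G) *ᵥ x) i - (g' i - g i)| := by
        rw [sub_mulVec]
        simp only [Pi.sub_apply]
        ring_nf
    _ ≤ |((A - G) *ᵥ x) i| + |g' i - g i| := abs_sub _ _
    _ ≤ δ * ∑ j, |x j| + δ := add_le_add (abs_mulVec_le hAG x i) (hg i)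
    _ = δ * (∑ j, |x j| + 1) := by ring

theorem sq_sum_abs_le_card_mul_dotProduct_self (S : Finset ι) (x : ι → ℝ) :
    (∑ i ∈ S, |x i|) ^ 2 ≤ S.card * (x ⬝ᵥ x) :=
  calc (∑ i ∈ S, |x i|) ^ 2 ≤ S.card * ∑ i ∈ S, |x i| ^ 2 := sq_sum_le_card_mul_sum_sq
    _ ≤ S.card * ∑ i, |x i| ^ 2 := by
      gcongr
      exact S.subset_univ
    _ = S.card * (x ⬝ᵥ x) := by simp only [dotProduct, sq, abs_mul_abs_self]

theorem abs_le_sqrt_dotProduct_self (x : ι → ℝ) (i : ι) : |x i| ≤ √(x ⬝ᵥ x) := by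
  refine Real.abs_le_sqrt ?_
  rw [sq]
  exact Finset.single_le_sum (f := fun i => x i * x i) (fun _ _ => mul_self_nonneg _)
    (Finset.mem_univ i)

theorem sum_abs_sub_sum_abs_le_of_support_subset {S : Finset ι} {b : ι → ℝ}
    (hb : ∀ i ∉ S, b i = 0) (x : ι → ℝ) :
    ∑ i, |b i| - ∑ i, |x i| ≤ 2 * ∑ i ∈ S, |(x - b) i| - ∑ i, |(x - b) i| := by
  have hS : ∑ i ∈ S, |b i| - ∑ i ∈ S, |x i| ≤ ∑ i ∈ S, |(x - b) i| := by
    rw [← Finset.sum_sub_distrib]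
    exact Finset.sum_le_sum fun i _ => (abs_sub_abs_le_abs_sub _ _).trans_eq (abs_sub_comm _ _)
  have hbc : ∑ i ∈ Sᶜ, |b i| = 0 := Finset.sum_eq_zero fun i hi => by
    rw [hb i (Finset.mem_compl.mp hi), abs_zero]
  have hxc : ∑ i ∈ Sᶜ, |x i| = ∑ i ∈ Sᶜ, |(x - b) i| := Finset.sum_congr rfl fun i hi => by
    rw [Pi.sub_apply, hb i (Finset.mem_compl.mp hi), sub_zero]
  rw [← Finset.sum_add_sum_compl S fun i => |b i|, ← Finset.sum_add_sum_compl S fun i => |x i|,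
    ← Finset.sum_add_sum_compl S fun i => |(x - b) i|]
  linarith

theorem sub_mul_dotProduct_self_le_of_cone {S : Finset ι} {c r δ : ℝ} {h : ι → ℝ} (hδ : 0 ≤ δ)
    (hG : c * (h ⬝ᵥ h) ≤ h ⬝ᵥ G *ᵥ h) (hAG : ∀ i j, |A i j - G i j| ≤ δ)
    (hcone : ∑ i, |h i| ≤ r * ∑ i ∈ S, |h i|) :
    (c - r ^ 2 * (S.card * δ)) * (h ⬝ᵥ h) ≤ h ⬝ᵥ A *ᵥ h := by
  have hdiff : |h ⬝ᵥ A *ᵥ h - h ⬝ᵥ G *ᵥ h| ≤ r ^ 2 * (S.card * δ) * (h ⬝ᵥ h) :=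
    calc |h ⬝ᵥ A *ᵥ h - h ⬝ᵥ G *ᵥ h| = |h ⬝ᵥ (A - G) *ᵥ h| := by
          rw [sub_mulVec, dotProduct_sub]
      _ ≤ δ * (∑ i, |h i|) * ∑ i, |h i| := abs_dotProduct_le (abs_mulVec_le hAG h) h
      _ = δ * (∑ i, |h i|) ^ 2 := by ring
      _ ≤ δ * (r * ∑ i ∈ S, |h i|) ^ 2 := by gcongr
      _ = δ * r ^ 2 * (∑ i ∈ S, |h i|) ^ 2 := by ring
      _ ≤ δ * r ^ 2 * (S.card * (h ⬝ᵥ h)) := by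
        gcongr
        exact sq_sum_abs_le_card_mul_dotProduct_self S h
      _ = r ^ 2 * (S.card * δ) * (h ⬝ᵥ h) := by ring
  linarith [(abs_le.mp hdiff).1]

end LinearAlgebra

section ColumnNorms

variable {m n : ℕ}

theorem sum_abs_le_colOneNorm (M : Matrix (Fin m) (Fin n) ℝ) (j : Fin n) :
    ∑ i, |M i j| ≤ colOneNorm M :=
  le_ciSup (f := fun j => ∑ i, |M i j|) (Set.finite_range _).bddAbove j

theorem colOneNorm_nonneg (M : Matrix (Fin m) (Fin n) ℝ) : 0 ≤ colOneNorm M :=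
  Real.iSup_nonneg fun _ => Finset.sum_nonneg fun _ _ => abs_nonneg _

theorem card_support_col_le_maxColSupport (M : Matrix (Fin m) (Fin n) ℝ) (j : Fin n) :
    (Finset.univ.filter fun i => M.col j i ≠ 0).card ≤ maxColSupport M :=
  Finset.le_sup (f := fun j => (Finset.univ.filter fun i => M i j ≠ 0).card) (Finset.mem_univ j)

theorem abs_le_colOneNorm_inv_mul {G : Matrix (Fin n) (Fin n) ℝ} (hG : G.IsSymm)
    (hdet : IsUnit G.det) {x : Fin n → ℝ} {r : ℝ} (hr : 0 ≤ r) (hx : ∀ k, |(G *ᵥ x) k| ≤ r)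
    (i : Fin n) : |x i| ≤ colOneNorm G⁻¹ * r := by
  have hrow : ∑ k, |G⁻¹ i k| ≤ colOneNorm G⁻¹ := by
    simpa only [hG.inv.apply i] using sum_abs_le_colOneNorm G⁻¹ i
  calc |x i| = |(G⁻¹ *ᵥ G *ᵥ x) i| := by rw [mulVec_mulVec, nonsing_inv_mul _ hdet, one_mulVec]
    _ ≤ r * ∑ k, |G⁻¹ i k| := abs_dotProduct_le hx (G⁻¹ i)
    _ ≤ colOneNorm G⁻¹ * r := by
      rw [mul_comm]
      gcongr

end ColumnNorms

section Lasso

variable {ι : Type*} [Fintype ι] {A G : Matrix ι ι ℝ} {g b x : ι → ℝ} {δ lam : ℝ}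

/-- The Lasso objective `xᵀ A x - 2 xᵀ g + λ ‖x‖₁`: the contribution of a single column to the
regularised Yule–Walker criterion. -/
def lassoObjective (A : Matrix ι ι ℝ) (g : ι → ℝ) (lam : ℝ) (x : ι → ℝ) : ℝ :=
  x ⬝ᵥ A *ᵥ x - 2 * (x ⬝ᵥ g) + lam * ∑ i, |x i|

theorem lassoObjective_add (hA : A.IsSymm) (g : ι → ℝ) (lam : ℝ) (x h : ι → ℝ) :
    lassoObjective A g lam (x + h) = lassoObjective A g lam x + h ⬝ᵥ A *ᵥ h
      + 2 * (h ⬝ᵥ (A *ᵥ x - g)) + lam * (∑ i, |(x + h) i| - ∑ i, |x i|) := by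
  have hsymm : x ⬝ᵥ A *ᵥ h = h ⬝ᵥ A *ᵥ x := by
    simpa only [hA.eq] using dotProduct_transpose_mulVec A x h
  simp only [lassoObjective, mulVec_add, dotProduct_add, add_dotProduct, dotProduct_sub, hsymm]
  ring

theorem abs_mulVec_sub_le_of_isMinOn_lassoObjective (hA : A.IsSymm) (hlam : 0 ≤ lam)
    (hx : IsMinOn (lassoObjective A g lam) Set.univ x) (k : ι) :
    |(A *ᵥ x - g) k| ≤ lam / 2 := by
  classical
  suffices h : 2 * |(A *ᵥ x - g) k| ≤ lam by linarith
  refine two_mul_abs_le_of_forall_quadratic_nonneg (a := A k k) fun e => ?_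
  have hmin := isMinOn_univ_iff.mp hx (x + Pi.single k e)
  have hquad : Pi.single k e ⬝ᵥ A *ᵥ Pi.single k e = A k k * e ^ 2 := by
    simp only [mulVec_single, single_dotProduct, Pi.smul_apply, col_apply,
      MulOpposite.smul_eq_mul_unop, MulOpposite.unop_op]
    ring
  have hl1 : ∑ i, |(x + Pi.single k e : ι → ℝ) i| - ∑ i, |x i| ≤ |e| :=
    calc ∑ i, |(x + Pi.single k e : ι → ℝ) i| - ∑ i, |x i|
        ≤ ∑ i, |(Pi.single k e : ι → ℝ) i| := by
          rw [sub_le_iff_le_add', ← Finset.sum_add_distrib]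
          exact Finset.sum_le_sum fun i _ => abs_add_le _ _
      _ = |e| := by
          rw [Fintype.sum_eq_single k fun i hi => by rw [Pi.single_eq_of_ne hi, abs_zero],
            Pi.single_eq_same]
  rw [lassoObjective_add hA, hquad, single_dotProduct] at hmin
  linarith [mul_le_mul_of_nonneg_left hl1 hlam]

theorem dotProduct_mulVec_add_le_of_isMinOn_lassoObjective (hA : A.IsSymm)
    (hx : IsMinOn (lassoObjective A g lam) Set.univ x) {r : ℝ} (hr : ∀ i, |(A *ᵥ b - g) i| ≤ r) :
    (x - b) ⬝ᵥ A *ᵥ (x - b) + lam * ∑ i, |x i| ≤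
      2 * r * ∑ i, |(x - b) i| + lam * ∑ i, |b i| := by
  have hmin := isMinOn_univ_iff.mp hx b
  have hexp := lassoObjective_add hA g lam b (x - b)
  rw [add_sub_cancel] at hexp
  linarith [(abs_le.mp (abs_dotProduct_le hr (x - b))).1]

theorem sum_abs_le_three_mul_of_isMinOn_lassoObjective (hA : A.PosSemidef) (hlam : 0 < lam)
    (hx : IsMinOn (lassoObjective A g lam) Set.univ x)
    (hb : ∀ i, |(A *ᵥ b - g) i| ≤ lam / 4) : ∑ i, |x i| ≤ 3 * ∑ i, |b i| := by
  have hbasic :=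
    dotProduct_mulVec_add_le_of_isMinOn_lassoObjective (isHermitian_iff_isSymm.mp hA.1) hx hb
  have hquad : 0 ≤ (x - b) ⬝ᵥ A *ᵥ (x - b) := hA.dotProduct_mulVec_nonneg (x - b)
  have htri : ∑ i, |(x - b) i| ≤ ∑ i, |x i| + ∑ i, |b i| := by
    rw [← Finset.sum_add_distrib]
    exact Finset.sum_le_sum fun i _ => abs_sub _ _
  refine le_of_mul_le_mul_left ?_ hlam
  linarith [mul_le_mul_of_nonneg_left htri hlam.le]

theorem abs_mulVec_sub_le_of_close (hAG : ∀ i j, |A i j - G i j| ≤ δ)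
    (hg : ∀ i, |g i - (G *ᵥ b) i| ≤ δ) (hlam : 4 * (∑ i, |b i| + 1) * δ ≤ lam) (i : ι) :
    |(A *ᵥ b - g) i| ≤ lam / 4 := by
  have hnoise := abs_mulVec_sub_sub_mulVec_sub_le hAG hg b i
  rw [sub_self, Pi.zero_apply, sub_zero] at hnoise
  linarith

theorem abs_mulVec_sub_le_of_isMinOn_lassoObjective_of_close (hA : A.PosSemidef) (hδ : 0 ≤ δ)
    (hAG : ∀ i j, |A i j - G i j| ≤ δ) (hg : ∀ i, |g i - (G *ᵥ b) i| ≤ δ) (hlam_pos : 0 < lam)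
    (hlam : 4 * (∑ i, |b i| + 1) * δ ≤ lam)
    (hx : IsMinOn (lassoObjective A g lam) Set.univ x) (k : ι) :
    |(G *ᵥ (x - b)) k| ≤ 5 / 4 * lam := by
  have hkkt := abs_mulVec_sub_le_of_isMinOn_lassoObjective (isHermitian_iff_isSymm.mp hA.1)
    hlam_pos.le hx k
  have hl1 := sum_abs_le_three_mul_of_isMinOn_lassoObjective hA hlam_pos hx
    (abs_mulVec_sub_le_of_close hAG hg hlam)
  have hnoise : |(A *ᵥ x - g) k - (G *ᵥ (x - b)) k| ≤ 3 / 4 * lam :=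
    calc |(A *ᵥ x - g) k - (G *ᵥ (x - b)) k| ≤ δ * (∑ i, |x i| + 1) := by
          rw [mulVec_sub]
          exact abs_mulVec_sub_sub_mulVec_sub_le hAG hg x k
      _ ≤ δ * (3 * ∑ i, |b i| + 3) := by gcongr; norm_num
      _ ≤ 3 / 4 * lam := by linarith
  calc |(G *ᵥ (x - b)) k|
      = |(A *ᵥ x - g) k - ((A *ᵥ x - g) k - (G *ᵥ (x - b)) k)| := by rw [sub_sub_cancel]
    _ ≤ |(A *ᵥ x - g) k| + |(A *ᵥ x - g) k - (G *ᵥ (x - b)) k| := abs_sub _ _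
    _ ≤ 5 / 4 * lam := by linarith

theorem dotProduct_mulVec_add_le_of_support_subset (hA : A.IsSymm) (hlam : 0 ≤ lam)
    (hx : IsMinOn (lassoObjective A g lam) Set.univ x)
    (hb : ∀ i, |(A *ᵥ b - g) i| ≤ lam / 4) {S : Finset ι} (hS : ∀ i ∉ S, b i = 0) :
    (x - b) ⬝ᵥ A *ᵥ (x - b) + lam / 2 * ∑ i, |(x - b) i| ≤ 2 * lam * ∑ i ∈ S, |(x - b) i| := by
  have hbasic := dotProduct_mulVec_add_le_of_isMinOn_lassoObjective hA hx hb
  have hsupp := mul_le_mul_of_nonneg_left (sum_abs_sub_sum_abs_le_of_support_subset hS x) hlam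
  linarith

theorem sum_abs_sub_le_four_mul_of_support_subset (hA : A.PosSemidef) (hlam : 0 < lam)
    (hx : IsMinOn (lassoObjective A g lam) Set.univ x)
    (hb : ∀ i, |(A *ᵥ b - g) i| ≤ lam / 4) {S : Finset ι} (hS : ∀ i ∉ S, b i = 0) :
    ∑ i, |(x - b) i| ≤ 4 * ∑ i ∈ S, |(x - b) i| := by
  have hupper := dotProduct_mulVec_add_le_of_support_subset (isHermitian_iff_isSymm.mp hA.1)
    hlam.le hx hb hS
  have hquad : 0 ≤ (x - b) ⬝ᵥ A *ᵥ (x - b) := hA.dotProduct_mulVec_nonneg (x - b)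
  refine le_of_mul_le_mul_left ?_ hlam
  linarith

theorem sqrt_dotProduct_self_le_of_isMinOn_lassoObjective (hA : A.PosSemidef) {c : ℝ} (hc : 0 < c)
    (hG : 2 * c * ((x - b) ⬝ᵥ (x - b)) ≤ (x - b) ⬝ᵥ G *ᵥ (x - b)) (hδ : 0 ≤ δ)
    (hAG : ∀ i j, |A i j - G i j| ≤ δ) (hlam : 0 < lam)
    (hx : IsMinOn (lassoObjective A g lam) Set.univ x) (hb : ∀ i, |(A *ᵥ b - g) i| ≤ lam / 4)
    {S : Finset ι} (hS : ∀ i ∉ S, b i = 0) (hSδ : S.card * δ ≤ c / 16) :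
    √((x - b) ⬝ᵥ (x - b)) ≤ 2 * √S.card * lam / c := by
  set h := x - b
  have hupper := dotProduct_mulVec_add_le_of_support_subset (isHermitian_iff_isSymm.mp hA.1)
    hlam.le hx hb hS
  have hcone := sum_abs_sub_le_four_mul_of_support_subset hA hlam hx hb hS
  have hl1 : 0 ≤ lam / 2 * ∑ i, |h i| := by positivity
  have hhh : 0 ≤ h ⬝ᵥ h := dotProduct_star_self_nonneg h
  have hlower : c * (h ⬝ᵥ h) ≤ h ⬝ᵥ A *ᵥ h :=
    calc c * (h ⬝ᵥ h) ≤ (2 * c - 4 ^ 2 * (S.card * δ)) * (h ⬝ᵥ h) := by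
          gcongr
          linarith
      _ ≤ h ⬝ᵥ A *ᵥ h := sub_mul_dotProduct_self_le_of_cone hδ hG hAG hcone
  have hCS : ∑ i ∈ S, |h i| ≤ √S.card * √(h ⬝ᵥ h) := by
    rw [← Real.sqrt_mul (Nat.cast_nonneg _)]
    exact Real.le_sqrt_of_sq_le (sq_sum_abs_le_card_mul_dotProduct_self S h)
  rw [le_div_iff₀ hc]
  rcases (Real.sqrt_nonneg (h ⬝ᵥ h)).eq_or_lt with hzero | hpos
  · rw [← hzero, zero_mul]
    positivity
  · refine le_of_mul_le_mul_right ?_ hpos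
    calc √(h ⬝ᵥ h) * c * √(h ⬝ᵥ h) = c * (h ⬝ᵥ h) := by
          rw [mul_right_comm, Real.mul_self_sqrt hhh, mul_comm]
      _ ≤ 2 * lam * ∑ i ∈ S, |h i| := by linarith
      _ ≤ 2 * lam * (√S.card * √(h ⬝ᵥ h)) := by gcongr
      _ = 2 * √S.card * lam * √(h ⬝ᵥ h) := by ring

end Lasso

section YuleWalker

variable {ι κ : Type*} [Fintype ι] [Fintype κ]

/-- The ℓ¹-regularised Yule–Walker criterion `tr (Mᵀ A M) - 2 tr (Mᵀ g) + λ |M|₁`, with `A` and `g`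
in the roles of the estimated autocovariance matrices. -/
def yuleWalkerObjective (A : Matrix ι ι ℝ) (g : Matrix ι κ ℝ) (lam : ℝ) (M : Matrix ι κ ℝ) : ℝ :=
  Matrix.trace (Mᵀ * A * M) - 2 * Matrix.trace (Mᵀ * g) + lam * ∑ i, ∑ j, |M i j|

theorem yuleWalkerObjective_eq_sum_lassoObjective (A : Matrix ι ι ℝ) (g : Matrix ι κ ℝ) (lam : ℝ)
    (M : Matrix ι κ ℝ) :
    yuleWalkerObjective A g lam M = ∑ j, lassoObjective A (g.col j) lam (M.col j) := by
  simp only [yuleWalkerObjective, lassoObjective, Finset.sum_add_distrib, Finset.sum_sub_distrib,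
    ← Finset.mul_sum]
  rw [Finset.sum_comm, Matrix.mul_assoc]
  rfl

theorem isMinOn_lassoObjective_col {A : Matrix ι ι ℝ} {g M : Matrix ι κ ℝ} {lam : ℝ}
    (hM : IsMinOn (yuleWalkerObjective A g lam) Set.univ M) (j : κ) :
    IsMinOn (lassoObjective A (g.col j) lam) Set.univ (M.col j) := by
  classical
  refine isMinOn_univ_iff.mpr fun x => ?_
  have hmin := isMinOn_univ_iff.mp hM (M.updateCol j x)
  have hself : (M.updateCol j x).col j = x := funext fun i => by
    rw [col_apply, updateCol_self]
  have hother : ∀ k ∈ Finset.univ.erase j, lassoObjective A (g.col k) lam ((M.updateCol j x).col k)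
      = lassoObjective A (g.col k) lam (M.col k) := fun k hk => by
    congr 1
    exact funext fun i => by rw [col_apply, updateCol_ne (Finset.ne_of_mem_erase hk), col_apply]
  rw [yuleWalkerObjective_eq_sum_lassoObjective, yuleWalkerObjective_eq_sum_lassoObjective,
    ← Finset.add_sum_erase _ _ (Finset.mem_univ j), ← Finset.add_sum_erase _ _ (Finset.mem_univ j),
    hself, Finset.sum_congr rfl hother] at hmin
  exact le_of_add_le_add_right hmin

end YuleWalker

theorem abs_sub_le_of_isMinOn_yuleWalkerObjective {n q : ℕ} {c δ lam : ℝ} (hc : 0 < c) (hδ : 0 < δ)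
    {G : Matrix (Fin n) (Fin n) ℝ} (hG : G.IsHermitian) (heig : ∀ i, 2 * c ≤ hG.eigenvalues i)
    {g β : Matrix (Fin n) (Fin q) ℝ} (hβ : β = G⁻¹ * g)
    {Ghat : Matrix (Fin n) (Fin n) ℝ} (hGhat : Ghat.PosSemidef) {ghat : Matrix (Fin n) (Fin q) ℝ}
    (hGd : ∀ i j, |Ghat i j - G i j| ≤ δ) (hgd : ∀ i j, |ghat i j - g i j| ≤ δ)
    (hsin : (maxColSupport β : ℝ) * δ ≤ c / 16) (hlam : 4 * (colOneNorm β + 1) * δ ≤ lam)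
    {βhat : Matrix (Fin n) (Fin q) ℝ}
    (hmin : IsMinOn (yuleWalkerObjective Ghat ghat lam) Set.univ βhat) (i : Fin n) (j : Fin q) :
    |βhat i j - β i j| ≤
      min (5 / 4 * colOneNorm G⁻¹ * lam) (2 * √(maxColSupport β) * lam / c) := by
  have hdet : IsUnit G.det := by
    refine (isUnit_iff_isUnit_det G).mp (hG.posDef_iff_eigenvalues_pos.mpr fun k => ?_).isUnit
    linarith [heig k]
  have hgd_col : ∀ k, |ghat.col j k - (G *ᵥ β.col j) k| ≤ δ := fun k => by
    have hGβ : G *ᵥ β.col j = g.col j := by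
      rw [← mul_nonsing_inv_cancel_left G g hdet, ← hβ]
      rfl
    rw [hGβ]
    exact hgd k j
  have hlam_pos : 0 < lam := hlam.trans_lt' <| by
    have := colOneNorm_nonneg β
    positivity
  have hlam_col : 4 * (∑ k, |β.col j k| + 1) * δ ≤ lam := hlam.trans' <| by
    gcongr
    exact sum_abs_le_colOneNorm β j
  have hx := isMinOn_lassoObjective_col hmin j
  refine le_min ?_ ?_
  · have hsup := abs_mulVec_sub_le_of_isMinOn_lassoObjective_of_close hGhat hδ.le hGd hgd_col
      hlam_pos hlam_col hx
    have h := abs_le_colOneNorm_inv_mul (isHermitian_iff_isSymm.mp hG) hdet (by positivity) hsup i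
    rwa [mul_comm (5 / 4 : ℝ), mul_assoc]
  · set S := Finset.univ.filter fun k => β.col j k ≠ 0
    have hS : ∀ k ∉ S, β.col j k = 0 := fun k hk => by
      simpa only [S, Finset.mem_filter_univ, not_not] using hk
    have hcard : (S.card : ℝ) ≤ maxColSupport β :=
      Nat.cast_le.mpr (card_support_col_le_maxColSupport β j)
    calc |βhat i j - β i j| ≤ √((βhat.col j - β.col j) ⬝ᵥ (βhat.col j - β.col j)) :=
          abs_le_sqrt_dotProduct_self (βhat.col j - β.col j) i
      _ ≤ 2 * √S.card * lam / c :=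
          sqrt_dotProduct_self_le_of_isMinOn_lassoObjective hGhat hc
            (mul_dotProduct_self_le_of_le_eigenvalues hG heig _) hδ.le hGd hlam_pos hx
            (abs_mulVec_sub_le_of_close hGd hgd_col hlam_col) hS
            (hsin.trans' (by gcongr))
      _ ≤ 2 * √(maxColSupport β) * lam / c := by gcongr

theorem sign_hardThreshold_eq {m n : ℕ} {M N : Matrix (Fin m) (Fin n) ℝ} {t : ℝ} {i : Fin m}
    {j : Fin n} (hMN : |M i j - N i j| ≤ t) (hN : N i j ≠ 0 → 2 * t < |N i j|) :
    Real.sign (hardThreshold M t i j) = Real.sign (N i j) := by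
  rw [hardThreshold, of_apply]
  have hM := abs_le.mp hMN
  rcases lt_trichotomy (N i j) 0 with hneg | hzero | hpos
  · have hsignal := hN hneg.ne
    rw [abs_of_neg hneg] at hsignal
    have hM_neg : M i j < 0 := by linarith
    rw [if_pos (by rw [abs_of_neg hM_neg]; linarith), Real.sign_of_neg hM_neg,
      Real.sign_of_neg hneg]
  · rw [hzero, sub_zero] at hMN
    rw [if_neg hMN.not_gt, hzero]
  · have hsignal := hN hpos.ne'
    rw [abs_of_pos hpos] at hsignal
    have hM_pos : 0 < M i j := by linarith
    rw [if_pos (by rw [abs_of_pos hM_pos]; linarith), Real.sign_of_pos hM_pos,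
      Real.sign_of_pos hpos]

theorem stmt9_general {n q : ℕ} {c δ lam t : ℝ} (hc : 0 < c) (hδ : 0 < δ)
    {G : Matrix (Fin n) (Fin n) ℝ} (hG : G.IsHermitian) (heig : ∀ i, 2 * c ≤ hG.eigenvalues i)
    {g β : Matrix (Fin n) (Fin q) ℝ} (hβ : β = G⁻¹ * g)
    {Ghat : Matrix (Fin n) (Fin n) ℝ} (hGhat : Ghat.PosSemidef) {ghat : Matrix (Fin n) (Fin q) ℝ}
    (hGd : ∀ i j, |Ghat i j - G i j| ≤ δ) (hgd : ∀ i j, |ghat i j - g i j| ≤ δ)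
    (hsin : (maxColSupport β : ℝ) * δ ≤ c / 16) (hlam : 4 * (colOneNorm β + 1) * δ ≤ lam)
    {βhat : Matrix (Fin n) (Fin q) ℝ}
    (hmin : IsMinOn (yuleWalkerObjective Ghat ghat lam) Set.univ βhat)
    (ht : min (5 / 4 * colOneNorm G⁻¹ * lam) (2 * √(maxColSupport β) * lam / c) ≤ t)
    (hsignal : ∀ i j, β i j ≠ 0 → 2 * t < |β i j|) :
    (∀ i j, Real.sign (hardThreshold βhat t i j) = Real.sign (β i j)) ∧
      ∀ i j, hardThreshold βhat t i j ≠ 0 ↔ β i j ≠ 0 := by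
  have hsign : ∀ i j, Real.sign (hardThreshold βhat t i j) = Real.sign (β i j) := fun i j =>
    sign_hardThreshold_eq ((abs_sub_le_of_isMinOn_yuleWalkerObjective hc hδ hG heig hβ hGhat hGd
      hgd hsin hlam hmin i j).trans ht) (hsignal i j)
  refine ⟨hsign, fun i j => not_congr ?_⟩
  rw [← Real.sign_eq_zero_iff, hsign, Real.sign_eq_zero_iff]

theorem stmt9 (p d : ℕ) (mxi δ lam : ℝ) (hmxi : 0 < mxi) (hδ : 0 < δ)
    (G : Matrix (Fin (p * d)) (Fin (p * d)) ℝ) (hG : G.IsHermitian)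
    (heig : ∀ i, 2 * Real.pi * mxi ≤ hG.eigenvalues i)
    (g β : Matrix (Fin (p * d)) (Fin p) ℝ) (hβ : β = G⁻¹ * g)
    (Ghat : Matrix (Fin (p * d)) (Fin (p * d)) ℝ) (hGhat : Ghat.PosSemidef)
    (ghat : Matrix (Fin (p * d)) (Fin p) ℝ)
    (hGd : ∀ i j, |Ghat i j - G i j| ≤ δ) (hgd : ∀ i j, |ghat i j - g i j| ≤ δ)
    (hsin : (maxColSupport β : ℝ) * δ ≤ Real.pi * mxi / 16)
    (hlam : 4 * (colOneNorm β + 1) * δ ≤ lam)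
    (βhat : Matrix (Fin (p * d)) (Fin p) ℝ)
    (hmin : ∀ M : Matrix (Fin (p * d)) (Fin p) ℝ,
      Matrix.trace (βhatᵀ * Ghat * βhat) - 2 * Matrix.trace (βhatᵀ * ghat) +
          lam * ∑ i, ∑ j, |βhat i j| ≤
        Matrix.trace (Mᵀ * Ghat * M) - 2 * Matrix.trace (Mᵀ * ghat) +
          lam * ∑ i, ∑ j, |M i j|)
    (hsignal : ∀ i j, β i j ≠ 0 →
      2 * min (4 * colOneNorm G⁻¹ * lam)
          (6 * Real.sqrt (maxColSupport β) * lam / (Real.pi * mxi)) < |β i j|) :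
    (∀ i j,
      Real.sign (hardThreshold βhat
        (min (4 * colOneNorm G⁻¹ * lam)
          (6 * Real.sqrt (maxColSupport β) * lam / (Real.pi * mxi))) i j) =
        Real.sign (β i j)) ∧
    (∀ i j,
      hardThreshold βhat
        (min (4 * colOneNorm G⁻¹ * lam)
          (6 * Real.sqrt (maxColSupport β) * lam / (Real.pi * mxi))) i j ≠ 0 ↔
        β i j ≠ 0) := by
  have hlam_nonneg : 0 ≤ lam := hlam.trans' <| by
    have := colOneNorm_nonneg β
    positivity
  have hG_nonneg := colOneNorm_nonneg G⁻¹
  exact stmt9_general (mul_pos Real.pi_pos hmxi) hδ hG (by simpa only [mul_assoc] using heig) hβ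
    hGhat hGd hgd hsin hlam (fun M _ => hmin M)
    (min_le_min (by gcongr; norm_num) (by gcongr; norm_num)) hsignal
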